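/- Assume f ∈ L^∞(Ω), u ∈ H²(Ω), and that r = f + a' u' − b u' − c u is not identically zero. There exist a constant γ > 0 depending only on Ω, a, b and c, and a positive integer N₀ independent of the finite element approximation and of the mesh, such that, with ρ₀ = (1 + γ (‖r‖_{L^∞(Ω)} / ‖r‖_{L^{2/3}(Ω)})^{2/3})², for every N ≥ N₀ and every mesh X ∈ S_N the quantities computed from the corresponding finite element solution satisfy: (1/2) ‖r‖_{L^{2/3}(Ω)}^{2/3} ≤ α_h^{1/3} ≤ (3/2) ‖r‖_{L^{2/3}(Ω)}^{2/3}, 1 ≤ ρ_i ≤ ρ₀ for all i, and 1 ≤ σ_h ≤ 2. -/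

import Mathlib

/-!
Setting of Huang–He, "Error analysis for equidistributing meshes":
the boundary value problem  −(a u')' + b u' + c u = f on Ω = (0,1), u(0)=u(1)=0,
its linear finite element discretization on a mesh 0 = x₀ < ⋯ < x_N = 1,
and the residual-based equidistribution quantities.
-/

noncomputable section
open MeasureTheory Real

namespace EquidMesh

/-- L² norm on (0,1). -/
def L2 (g : ℝ → ℝ) : ℝ := Real.sqrt (∫ t in (0:ℝ)..1, (g t)^2)

/-- L¹ norm on (0,1). -/
def L1 (g : ℝ → ℝ) : ℝ := ∫ t in (0:ℝ)..1, |g t|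

/-- The L^{2/3} quasi-norm on (0,1): (∫₀¹ |g|^{2/3})^{3/2}. -/
def Lp23 (g : ℝ → ℝ) : ℝ := (∫ t in (0:ℝ)..1, |g t| ^ ((2:ℝ)/3)) ^ ((3:ℝ)/2)

/-- L^∞ norm (essential supremum of |g|) on (0,1). -/
def Linf (g : ℝ → ℝ) : ℝ := essSup (fun t => |g t|) (volume.restrict (Set.Ioo (0:ℝ) 1))

/-- Membership in L²(0,1). -/
def MemL2 (g : ℝ → ℝ) : Prop :=
  Measurable g ∧ IntervalIntegrable (fun t => (g t)^2) volume 0 1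

/-- Membership in L^∞(0,1). -/
def MemLinf (g : ℝ → ℝ) : Prop :=
  Measurable g ∧ ∃ M : ℝ, ∀ᵐ x ∂(volume.restrict (Set.Ioo (0:ℝ) 1)), |g x| ≤ M

/-- `g` is absolutely continuous on [0,1] with derivative `g' ∈ L¹(0,1)`. -/
def HasL1Deriv (g g' : ℝ → ℝ) : Prop :=
  Measurable g' ∧ IntervalIntegrable g' volume 0 1 ∧
    ∀ x ∈ Set.Icc (0:ℝ) 1, g x = g 0 + ∫ t in (0:ℝ)..x, g' t

/-- A function in H¹(0,1): absolutely continuous on [0,1], carried together with its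
(a.e.) derivative, which lies in L²(0,1). -/
structure H1 where
  val : ℝ → ℝ
  dval : ℝ → ℝ
  dval_meas : Measurable dval
  dval_int : IntervalIntegrable dval volume 0 1
  dval_sq_int : IntervalIntegrable (fun t => (dval t)^2) volume 0 1
  ftc : ∀ x ∈ Set.Icc (0:ℝ) 1, val x = val 0 + ∫ t in (0:ℝ)..x, dval t

/-- `u ∈ H²(0,1)`: the derivative `u'` is absolutely continuous with `u'' ∈ L²(0,1)`. -/
def H1.IsH2 (u : H1) : Prop :=
  ∃ u'' : ℝ → ℝ, Measurable u'' ∧ IntervalIntegrable u'' volume 0 1 ∧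
    IntervalIntegrable (fun t => (u'' t)^2) volume 0 1 ∧
    ∀ x ∈ Set.Icc (0:ℝ) 1, u.dval x = u.dval 0 + ∫ t in (0:ℝ)..x, u'' t

/-- The coefficients of the elliptic problem on Ω = (0,1):
`a, b ∈ W^{1,∞}(Ω)`, `c ∈ L^∞(Ω)`, `a ≥ a₀ > 0`, and `c − b'/2 ≥ 0` a.e. -/
structure Coeffs where
  a : ℝ → ℝ
  b : ℝ → ℝ
  c : ℝ → ℝ
  a' : ℝ → ℝ
  b' : ℝ → ℝ
  a0 : ℝ
  a0_pos : 0 < a0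
  a_lb : ∀ x ∈ Set.Icc (0:ℝ) 1, a0 ≤ a x
  a'_meas : Measurable a'
  b'_meas : Measurable b'
  c_meas : Measurable c
  a'_int : IntervalIntegrable a' volume 0 1
  b'_int : IntervalIntegrable b' volume 0 1
  a'_bdd : ∃ M : ℝ, ∀ᵐ x ∂(volume.restrict (Set.Ioo (0:ℝ) 1)), |a' x| ≤ M
  b'_bdd : ∃ M : ℝ, ∀ᵐ x ∂(volume.restrict (Set.Ioo (0:ℝ) 1)), |b' x| ≤ M
  c_bdd : ∃ M : ℝ, ∀ᵐ x ∂(volume.restrict (Set.Ioo (0:ℝ) 1)), |c x| ≤ M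
  ftc_a : ∀ x ∈ Set.Icc (0:ℝ) 1, a x = a 0 + ∫ t in (0:ℝ)..x, a' t
  ftc_b : ∀ x ∈ Set.Icc (0:ℝ) 1, b x = b 0 + ∫ t in (0:ℝ)..x, b' t
  cb_nonneg : ∀ᵐ x ∂(volume.restrict (Set.Ioo (0:ℝ) 1)), 0 ≤ c x - b' x / 2

/-- The bilinear form B(u,v) = ∫₀¹ (a u' v' + b u' v + c u v) dx. -/
def Coeffs.B (P : Coeffs) (u v : H1) : ℝ :=
  ∫ t in (0:ℝ)..1,
    (P.a t * u.dval t * v.dval t + P.b t * u.dval t * v.val t + P.c t * u.val t * v.val t)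

/-- The right-hand side functional (f, v) = ∫₀¹ f v dx. -/
def ip (f : ℝ → ℝ) (v : H1) : ℝ := ∫ t in (0:ℝ)..1, f t * v.val t

/-- `u ∈ H¹₀(Ω)` is the weak solution: B(u,v) = (f,v) for all v ∈ H¹₀(Ω). -/
def Coeffs.IsWeakSolution (P : Coeffs) (f : ℝ → ℝ) (u : H1) : Prop :=
  u.val 0 = 0 ∧ u.val 1 = 0 ∧
    ∀ v : H1, v.val 0 = 0 → v.val 1 = 0 → P.B u v = ip f v

/-- A mesh of N elements of Ω = (0,1): 0 = x₀ < x₁ < ⋯ < x_N = 1. -/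
structure Mesh (N : ℕ) where
  x : ℕ → ℝ
  x_zero : x 0 = 0
  x_last : x N = 1
  x_mono : ∀ i < N, x i < x (i+1)

/-- Element length (the element of index `i` is `(x i, x (i+1))`, `0 ≤ i < N`). -/
def Mesh.h {N : ℕ} (m : Mesh N) (i : ℕ) : ℝ := m.x (i+1) - m.x i

/-- `v` is piecewise linear with respect to the mesh: its derivative is constant
inside each element. -/
def Mesh.IsPL {N : ℕ} (m : Mesh N) (v : H1) : Prop :=
  ∀ i < N, ∃ s : ℝ, ∀ t ∈ Set.Ioo (m.x i) (m.x (i+1)), v.dval t = s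

/-- `uh` is the linear finite element solution on the mesh `m`:
a continuous piecewise linear function vanishing at 0 and 1 with
B(u_h, v_h) = (f, v_h) for all piecewise linear v_h vanishing at 0 and 1. -/
def Coeffs.IsFESolution (P : Coeffs) (f : ℝ → ℝ) {N : ℕ} (m : Mesh N) (uh : H1) : Prop :=
  uh.val 0 = 0 ∧ uh.val 1 = 0 ∧ m.IsPL uh ∧
    ∀ v : H1, v.val 0 = 0 → v.val 1 = 0 → m.IsPL v → P.B uh v = ip f v

/-- The residual of `w`: r = f + a' w' − b w' − c w. -/
def Coeffs.res (P : Coeffs) (f : ℝ → ℝ) (w : H1) : ℝ → ℝ :=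
  fun t => f t + P.a' t * w.dval t - P.b t * w.dval t - P.c t * w.val t

/-- The element L² average ⟨g⟩_i = (h_i⁻¹ ∫_{K_i} g²)^{1/2}. -/
def Mesh.avg {N : ℕ} (m : Mesh N) (g : ℝ → ℝ) (i : ℕ) : ℝ :=
  Real.sqrt ((1 / m.h i) * ∫ t in (m.x i)..(m.x (i+1)), (g t)^2)

/-- The intensity parameter α_h = (Σ_i h_i ⟨g⟩_i^{2/3})³. -/
def Mesh.alpha {N : ℕ} (m : Mesh N) (g : ℝ → ℝ) : ℝ :=
  (∑ i ∈ Finset.range N, m.h i * (m.avg g i) ^ ((2:ℝ)/3)) ^ 3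

/-- The adaptation function value ρ_i = (1 + α_h⁻¹ ⟨g⟩_i²)^{1/3}. -/
def Mesh.rho {N : ℕ} (m : Mesh N) (g : ℝ → ℝ) (i : ℕ) : ℝ :=
  (1 + (m.alpha g)⁻¹ * (m.avg g i)^2) ^ ((1:ℝ)/3)

/-- σ_h = Σ_i ρ_i h_i. -/
def Mesh.sigma {N : ℕ} (m : Mesh N) (g : ℝ → ℝ) : ℝ :=
  ∑ i ∈ Finset.range N, m.rho g i * m.h i

/-- The mesh equidistributes (the piecewise constant adaptation function built from) `g`:
ρ_i h_i = σ_h / N for all elements. -/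
def Mesh.IsEquidistributing {N : ℕ} (m : Mesh N) (g : ℝ → ℝ) : Prop :=
  ∀ i < N, m.rho g i * m.h i = m.sigma g / (N:ℝ)

/-- Membership in the mesh set S_N: 1/(ρ₀ N) ≤ h_i ≤ 2/N for all i. -/
def Mesh.InS {N : ℕ} (m : Mesh N) (ρ0 : ℝ) : Prop :=
  ∀ i < N, 1 / (ρ0 * (N:ℝ)) ≤ m.h i ∧ m.h i ≤ 2 / (N:ℝ)

/-- The maximum norm distance ‖X − X̃‖_∞ between two meshes with the same N. -/
def meshDist {N : ℕ} (m m' : Mesh N) : ℝ :=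
  (Finset.range (N+1)).sup' (Finset.nonempty_range_iff.mpr (Nat.succ_ne_zero N))
    (fun i => |m.x i - m'.x i|)

/-- The energy norm squared ‖v‖_E² = ∫₀¹ (a v'² + (c − b'/2) v²) dx. -/
def Coeffs.energySq (P : Coeffs) (v : H1) : ℝ :=
  ∫ t in (0:ℝ)..1, (P.a t * (v.dval t)^2 + (P.c t - P.b' t / 2) * (v.val t)^2)

lemma toReal_eLpNorm_two {α : Type*} [MeasurableSpace α] {μ : Measure α} {f : α → ℝ}
    (hf : MemLp f 2 μ) : (eLpNorm f 2 μ).toReal = √(∫ t, f t ^ 2 ∂μ) := by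
  rw [hf.eLpNorm_eq_integral_rpow_norm (by norm_num) (by norm_num),
    ENNReal.toReal_ofReal (by positivity), Real.sqrt_eq_rpow]
  norm_num

lemma sqrt_integral_sq_add_le {α : Type*} [MeasurableSpace α] {μ : Measure α} {f g : α → ℝ}
    (hf : MemLp f 2 μ) (hg : MemLp g 2 μ) :
    √(∫ t, (f t + g t) ^ 2 ∂μ) ≤ √(∫ t, f t ^ 2 ∂μ) + √(∫ t, g t ^ 2 ∂μ) := by
  have h := toReal_eLpNorm_two (hf.add hg)
  simp only [Pi.add_apply] at h
  rw [← h, ← toReal_eLpNorm_two hf, ← toReal_eLpNorm_two hg,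
    ← ENNReal.toReal_add hf.eLpNorm_ne_top hg.eLpNorm_ne_top]
  exact ENNReal.toReal_mono (ENNReal.add_ne_top.2 ⟨hf.eLpNorm_ne_top, hg.eLpNorm_ne_top⟩)
    (eLpNorm_add_le hf.1 hg.1 (by norm_num))

lemma sq_integral_le {p q : ℝ} (hpq : p ≤ q) {g : ℝ → ℝ}
    (hg : IntervalIntegrable g volume p q)
    (hg2 : IntervalIntegrable (fun t => g t ^ 2) volume p q) :
    (∫ t in p..q, g t) ^ 2 ≤ (q - p) * ∫ t in p..q, g t ^ 2 := by
  rcases hpq.eq_or_lt with rfl | hlt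
  · simp
  set A := ∫ t in p..q, g t
  have h0 : 0 ≤ ∫ t in p..q, ((q - p) * g t - A) ^ 2 :=
    intervalIntegral.integral_nonneg hpq fun t _ => sq_nonneg _
  have h1 : ∫ t in p..q, ((q - p) * g t - A) ^ 2
      = (q - p) ^ 2 * (∫ t in p..q, g t ^ 2) - 2 * (q - p) * A * A + (q - p) * A ^ 2 := by
    have : (fun t => ((q - p) * g t - A) ^ 2)
        = fun t => (q - p) ^ 2 * g t ^ 2 - 2 * (q - p) * A * g t + A ^ 2 := by
      funext t; ring
    rw [this, intervalIntegral.integral_add, intervalIntegral.integral_sub,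
      intervalIntegral.integral_const_mul, intervalIntegral.integral_const_mul,
      intervalIntegral.integral_const, smul_eq_mul]
    · exact hg2.const_mul _
    · exact hg.const_mul _
    · exact (hg2.const_mul _).sub (hg.const_mul _)
    · exact intervalIntegrable_const
  have hd : 0 < q - p := sub_pos.2 hlt
  rw [h1] at h0
  have : 0 ≤ (q - p) * ((q - p) * (∫ t in p..q, g t ^ 2) - A ^ 2) := by linarith
  nlinarith [nonneg_of_mul_nonneg_right this hd]

/-- Lebesgue measure on the unit interval. -/
abbrev unitVol : Measure ℝ := volume.restrict (Set.Ioc 0 1)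

namespace Mesh

variable {N : ℕ} (m : Mesh N)

lemma x_le {i j : ℕ} (hij : i ≤ j) (hj : j ≤ N) : m.x i ≤ m.x j := by
  induction j, hij using Nat.le_induction with
  | base => exact le_rfl
  | succ k hk ih => exact (ih (by omega)).trans (m.x_mono k (by omega)).le

lemma x_nonneg {i : ℕ} (hi : i ≤ N) : 0 ≤ m.x i := by
  simpa [m.x_zero] using m.x_le (Nat.zero_le i) hi

lemma x_le_one {i : ℕ} (hi : i ≤ N) : m.x i ≤ 1 := by
  simpa [m.x_last] using m.x_le hi le_rfl

lemma h_pos {i : ℕ} (hi : i < N) : 0 < m.h i := sub_pos.2 (m.x_mono i hi)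

lemma Ioc_subset {i : ℕ} (hi : i < N) :
    Set.Ioc (m.x i) (m.x (i + 1)) ⊆ Set.Ioc 0 1 :=
  Set.Ioc_subset_Ioc (m.x_nonneg hi.le) (m.x_le_one hi)

lemma sum_h : ∑ i ∈ Finset.range N, m.h i = 1 := by
  simp only [h, Finset.sum_range_sub, m.x_zero, m.x_last, sub_zero]

lemma intervalIntegrable {g : ℝ → ℝ} (hg : Integrable g unitVol) {i : ℕ} (hi : i < N) :
    IntervalIntegrable g volume (m.x i) (m.x (i + 1)) := by
  rw [intervalIntegrable_iff_integrableOn_Ioc_of_le (m.x_mono i hi).le]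
  exact IntegrableOn.mono_set hg (m.Ioc_subset hi)

lemma memLp {g : ℝ → ℝ} (hg : MemLp g 2 unitVol) {i : ℕ} (hi : i < N) :
    MemLp g 2 (volume.restrict (Set.Ioc (m.x i) (m.x (i + 1)))) :=
  hg.mono_measure (Measure.restrict_mono (m.Ioc_subset hi) le_rfl)

lemma sum_integral {g : ℝ → ℝ} (hg : Integrable g unitVol) :
    ∑ i ∈ Finset.range N, ∫ t in (m.x i)..(m.x (i + 1)), g t = ∫ t in (0:ℝ)..1, g t := by
  rw [intervalIntegral.sum_integral_adjacent_intervals (a := m.x)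
      fun k hk => m.intervalIntegrable hg hk,
    m.x_zero, m.x_last]

lemma integral_sq_nonneg (g : ℝ → ℝ) {i : ℕ} (hi : i < N) :
    0 ≤ ∫ t in (m.x i)..(m.x (i + 1)), g t ^ 2 :=
  intervalIntegral.integral_nonneg (m.x_mono i hi).le fun _ _ => sq_nonneg _

lemma avg_nonneg (g : ℝ → ℝ) (i : ℕ) : 0 ≤ m.avg g i := Real.sqrt_nonneg _

lemma avg_sq (g : ℝ → ℝ) {i : ℕ} (hi : i < N) :
    m.avg g i ^ 2 = 1 / m.h i * ∫ t in (m.x i)..(m.x (i + 1)), g t ^ 2 :=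
  Real.sq_sqrt (mul_nonneg (one_div_nonneg.2 (m.h_pos hi).le) (m.integral_sq_nonneg g hi))

lemma avg_add_le {f g : ℝ → ℝ} (hf : MemLp f 2 unitVol) (hg : MemLp g 2 unitVol) {i : ℕ}
    (hi : i < N) : m.avg (fun t => f t + g t) i ≤ m.avg f i + m.avg g i := by
  have h0 : 0 ≤ 1 / m.h i := one_div_nonneg.2 (m.h_pos hi).le
  simp only [avg, Real.sqrt_mul h0, ← mul_add,
    intervalIntegral.integral_of_le (m.x_mono i hi).le]
  exact mul_le_mul_of_nonneg_left (sqrt_integral_sq_add_le (m.memLp hf hi) (m.memLp hg hi))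
    (Real.sqrt_nonneg _)

lemma avg_neg (g : ℝ → ℝ) (i : ℕ) : m.avg (fun t => -g t) i = m.avg g i := by
  simp [avg]

lemma avg_le_of_abs_le {g : ℝ → ℝ} {L : ℝ} (hg : MemLp g 2 unitVol)
    (hL : ∀ᵐ t ∂unitVol, |g t| ≤ L) {i : ℕ} (hi : i < N) (hL0 : 0 ≤ L) : m.avg g i ≤ L := by
  have h1 : ∫ t in (m.x i)..(m.x (i + 1)), g t ^ 2 ≤ ∫ t in (m.x i)..(m.x (i + 1)), L ^ 2 := by
    rw [intervalIntegral.integral_of_le (m.x_mono i hi).le,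
      intervalIntegral.integral_of_le (m.x_mono i hi).le]
    refine integral_mono_ae (m.memLp hg hi).integrable_sq (integrable_const _) ?_
    filter_upwards [ae_restrict_of_ae_restrict_of_subset (m.Ioc_subset hi) hL] with t ht
    exact sq_le_sq' (abs_le.1 ht).1 (abs_le.1 ht).2
  rw [intervalIntegral.integral_const, smul_eq_mul] at h1
  refine abs_le_of_sq_le_sq' ?_ hL0 |>.2
  rw [m.avg_sq g hi, one_div_mul_eq_div, div_le_iff₀ (m.h_pos hi), mul_comm]
  exact h1

/-- The quantity `Σ_i h_i ⟨g⟩_i^{2/3}`, the cube root of the intensity parameter. -/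
def rootSum (g : ℝ → ℝ) : ℝ := ∑ i ∈ Finset.range N, m.h i * (m.avg g i) ^ ((2:ℝ)/3)

lemma rootSum_nonneg (g : ℝ → ℝ) : 0 ≤ m.rootSum g :=
  Finset.sum_nonneg fun i hi =>
    mul_nonneg (m.h_pos (Finset.mem_range.1 hi)).le (Real.rpow_nonneg (m.avg_nonneg g i) _)

lemma alpha_eq (g : ℝ → ℝ) : m.alpha g = m.rootSum g ^ 3 := rfl

lemma alpha_rpow (g : ℝ → ℝ) : m.alpha g ^ ((1:ℝ)/3) = m.rootSum g := by
  rw [alpha_eq, ← Real.rpow_natCast, ← Real.rpow_mul (m.rootSum_nonneg g)]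
  norm_num

lemma rootSum_add_le {f g : ℝ → ℝ} (hf : MemLp f 2 unitVol) (hg : MemLp g 2 unitVol) :
    m.rootSum (fun t => f t + g t) ≤ m.rootSum f + m.rootSum g := by
  rw [rootSum, rootSum, rootSum, ← Finset.sum_add_distrib]
  refine Finset.sum_le_sum fun i hi => ?_
  have hi := Finset.mem_range.1 hi
  rw [← mul_add]
  refine mul_le_mul_of_nonneg_left ?_ (m.h_pos hi).le
  exact (Real.rpow_le_rpow (m.avg_nonneg _ _) (m.avg_add_le hf hg hi) (by norm_num)).trans
    (Real.rpow_add_le_add_rpow (m.avg_nonneg _ _) (m.avg_nonneg _ _) (by norm_num) (by norm_num))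

lemma rootSum_neg (g : ℝ → ℝ) : m.rootSum (fun t => -g t) = m.rootSum g := by
  simp only [rootSum, avg_neg]

lemma rpow_two_thirds {y : ℝ} (hy : 0 ≤ y) : y ^ ((2:ℝ)/3) = (y ^ 2) ^ ((1:ℝ)/3) := by
  rw [← Real.rpow_natCast, ← Real.rpow_mul hy]
  norm_num

lemma rootSum_le {g : ℝ → ℝ} (hg : MemLp g 2 unitVol) :
    m.rootSum g ≤ (∫ t in (0:ℝ)..1, g t ^ 2) ^ ((1:ℝ)/3) := by
  have hc := (Real.concaveOn_rpow (p := 1/3) (by norm_num) (by norm_num)).le_map_sum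
    (t := Finset.range N) (w := m.h) (p := fun i => m.avg g i ^ 2)
    (fun i hi => (m.h_pos (Finset.mem_range.1 hi)).le) m.sum_h (fun i _ => sq_nonneg (m.avg g i))
  simp only [smul_eq_mul] at hc
  have h1 : ∑ i ∈ Finset.range N, m.h i * m.avg g i ^ 2 = ∫ t in (0:ℝ)..1, g t ^ 2 := by
    rw [← m.sum_integral hg.integrable_sq]
    refine Finset.sum_congr rfl fun i hi => ?_
    have hi := Finset.mem_range.1 hi
    rw [m.avg_sq g hi, ← mul_assoc, mul_one_div_cancel (m.h_pos hi).ne', one_mul]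
  rw [h1] at hc
  simpa only [rootSum, rpow_two_thirds (m.avg_nonneg _ _)] using hc

end Mesh

lemma integrable_rpow_two_thirds {g : ℝ → ℝ} {μ : Measure ℝ} [IsFiniteMeasure μ]
    (hg : MemLp g 2 μ) : Integrable (fun t => |g t| ^ ((2:ℝ)/3)) μ := by
  refine Integrable.mono' ((integrable_const (1:ℝ)).add hg.integrable_sq) ?_ ?_
  · exact (hg.1.aemeasurable.abs.pow_const _).aestronglyMeasurable
  · refine Filter.Eventually.of_forall fun t => ?_
    have h0 := abs_nonneg (g t)
    rw [Real.norm_of_nonneg (Real.rpow_nonneg h0 _), Pi.add_apply, ← sq_abs (g t)]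
    rcases le_total (|g t|) 1 with h | h
    · have := Real.rpow_le_one h0 h (by norm_num : (0:ℝ) ≤ 2/3)
      have := sq_nonneg (|g t|)
      linarith
    · have := Real.rpow_le_rpow_of_exponent_le h (by norm_num : (2:ℝ)/3 ≤ (2:ℕ))
      rw [Real.rpow_natCast] at this
      linarith

namespace Mesh

variable {N : ℕ} (m : Mesh N)

lemma le_rootSum {g : ℝ → ℝ} (hg : MemLp g 2 unitVol) :
    ∫ t in (0:ℝ)..1, |g t| ^ ((2:ℝ)/3) ≤ m.rootSum g := by
  rw [← m.sum_integral (integrable_rpow_two_thirds hg), rootSum]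
  refine Finset.sum_le_sum fun i hi => ?_
  have hi := Finset.mem_range.1 hi
  have hlt := m.x_mono i hi
  have hp := m.h_pos hi
  have hv : volume.real (Set.Ioc (m.x i) (m.x (i + 1))) = m.h i := by
    rw [Real.volume_real_Ioc_of_le hlt.le]; rfl
  have hJ := (Real.concaveOn_rpow (p := 1/3) (by norm_num) (by norm_num)).le_map_set_average
    (μ := volume) (t := Set.Ioc (m.x i) (m.x (i + 1))) (f := fun t => g t ^ 2)
    (Real.continuous_rpow_const (by norm_num)).continuousOn isClosed_Ici
    (by simpa using hlt) (by simp)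
    (Filter.Eventually.of_forall fun t => sq_nonneg (g t)) (m.memLp hg hi).integrable_sq
    (by
      refine (integrable_rpow_two_thirds (m.memLp hg hi)).congr
        (Filter.Eventually.of_forall fun t => ?_)
      simp only [Function.comp_apply, rpow_two_thirds (abs_nonneg (g t)), sq_abs])
  rw [setAverage_eq, setAverage_eq, hv, smul_eq_mul, smul_eq_mul,
    ← intervalIntegral.integral_of_le hlt.le, ← intervalIntegral.integral_of_le hlt.le,
    inv_mul_le_iff₀ hp] at hJ
  simp only [rpow_two_thirds (m.avg_nonneg _ _), rpow_two_thirds (abs_nonneg _), sq_abs,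
    m.avg_sq g hi, one_div_mul_eq_div]
  rwa [inv_mul_eq_div] at hJ

lemma rootSum_le_of_oscillation {g : ℝ → ℝ} (hg : MemLp g 2 unitVol) {ω : ℝ} (hω0 : 0 ≤ ω)
    (hω : ∀ i < N, ∀ s ∈ Set.Icc (m.x i) (m.x (i + 1)), ∀ t ∈ Set.Icc (m.x i) (m.x (i + 1)),
      |g s - g t| ≤ ω) :
    m.rootSum g ≤ (∫ t in (0:ℝ)..1, |g t| ^ ((2:ℝ)/3)) + ω ^ ((2:ℝ)/3) := by
  rw [← m.sum_integral (integrable_rpow_two_thirds hg), rootSum]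
  have hs : ω ^ ((2:ℝ)/3) = ∑ i ∈ Finset.range N, m.h i * ω ^ ((2:ℝ)/3) := by
    rw [← Finset.sum_mul, m.sum_h, one_mul]
  rw [hs, ← Finset.sum_add_distrib]
  refine Finset.sum_le_sum fun i hi => ?_
  have hi := Finset.mem_range.1 hi
  have hlt := m.x_mono i hi
  have hp := m.h_pos hi
  have hint := m.intervalIntegrable (integrable_rpow_two_thirds hg) hi
  have key : ∀ t ∈ Set.Icc (m.x i) (m.x (i + 1)),
      m.avg g i ^ ((2:ℝ)/3) ≤ |g t| ^ ((2:ℝ)/3) + ω ^ ((2:ℝ)/3) := by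
    intro t ht
    have h1 : m.avg g i ≤ |g t| + ω := by
      have h2 : ∫ s in (m.x i)..(m.x (i + 1)), g s ^ 2
          ≤ ∫ s in (m.x i)..(m.x (i + 1)), (|g t| + ω) ^ 2 := by
        refine intervalIntegral.integral_mono_on hlt.le (m.intervalIntegrable hg.integrable_sq hi)
          intervalIntegrable_const fun s hs => ?_
        have h3 := hω i hi s hs t ht
        have h4 : |g s| ≤ |g t| + ω := by
          have := abs_sub_abs_le_abs_sub (g s) (g t)
          linarith
        rw [← sq_abs (g s)]
        exact pow_le_pow_left₀ (abs_nonneg _) h4 2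
      rw [intervalIntegral.integral_const, smul_eq_mul] at h2
      refine abs_le_of_sq_le_sq' ?_ (by positivity) |>.2
      rw [m.avg_sq g hi, one_div_mul_eq_div, div_le_iff₀ hp, mul_comm]
      exact h2
    exact (Real.rpow_le_rpow (m.avg_nonneg _ _) h1 (by norm_num)).trans
      (Real.rpow_add_le_add_rpow (abs_nonneg _) hω0 (by norm_num) (by norm_num))
  have h5 := intervalIntegral.integral_mono_on hlt.le intervalIntegrable_const
    (hint.add intervalIntegrable_const) key
  rw [intervalIntegral.integral_add hint intervalIntegrable_const,
    intervalIntegral.integral_const, intervalIntegral.integral_const] at h5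
  exact h5

end Mesh

lemma exists_rootSum_le {r : ℝ → ℝ} (hr : MemLp r 2 unitVol) {ε : ℝ} (hε : 0 < ε) :
    ∃ δ > 0, ∀ (N : ℕ) (m : Mesh N), (∀ i < N, m.h i < δ) →
      m.rootSum r ≤ (∫ t in (0:ℝ)..1, |r t| ^ ((2:ℝ)/3)) + ε := by
  set η : ℝ := ε / 3 with hη
  have hη0 : 0 < η := by positivity
  have hη32 : 0 < η ^ ((3:ℝ)/2) := by positivity
  obtain ⟨g, hgc, hrg, hg, hg2⟩ := hr.exists_hasCompactSupport_eLpNorm_sub_le (by norm_num)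
    (ε := ENNReal.ofReal (η ^ ((3:ℝ)/2))) (by simpa using hη32)
  have hd : MemLp (fun t => r t - g t) 2 unitVol := hr.sub hg2
  have hd' : MemLp (fun t => g t - r t) 2 unitVol := hg2.sub hr
  have hroot : (∫ t in (0:ℝ)..1, (r t - g t) ^ 2) ^ ((1:ℝ)/3) ≤ η := by
    have h1 := ENNReal.toReal_mono ENNReal.ofReal_ne_top hrg
    rw [toReal_eLpNorm_two (hr.sub hg2), ENNReal.toReal_ofReal hη32.le,
      ← intervalIntegral.integral_of_le zero_le_one] at h1
    have h2 := Real.rpow_le_rpow (Real.sqrt_nonneg _) h1 (by norm_num : (0:ℝ) ≤ 2/3)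
    rw [Mesh.rpow_two_thirds (Real.sqrt_nonneg _), Real.sq_sqrt
      (intervalIntegral.integral_nonneg zero_le_one fun t _ => sq_nonneg _),
      ← Real.rpow_mul hη0.le] at h2
    norm_num at h2 ⊢
    exact h2
  obtain ⟨δ, hδ, hu⟩ := Metric.uniformContinuous_iff.1
    (hgc.uniformContinuous_of_continuous hg) _ hη32
  refine ⟨δ, hδ, fun N m hm => ?_⟩
  have hg1 := m.rootSum_le_of_oscillation hg2 hη32.le fun i hi s hs t ht => by
    have : dist s t < δ := by
      rw [Real.dist_eq, abs_lt]
      have := hm i hi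
      simp only [Mesh.h] at this
      constructor <;> linarith [hs.1, hs.2, ht.1, ht.2]
    exact (hu this).le
  rw [← Real.rpow_mul hη0.le, show (3:ℝ)/2 * (2/3) = 1 by norm_num, Real.rpow_one] at hg1
  have hr1 : m.rootSum r ≤ m.rootSum g + η := by
    have h1 := m.rootSum_add_le hg2 hd
    simp only [add_sub_cancel] at h1
    linarith [m.rootSum_le hd]
  have hI : ∫ t in (0:ℝ)..1, |g t| ^ ((2:ℝ)/3)
      ≤ (∫ t in (0:ℝ)..1, |r t| ^ ((2:ℝ)/3)) + η := by
    have h1 : ∫ t in (0:ℝ)..1, |r t - g t| ^ ((2:ℝ)/3) ≤ η :=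
      (m.le_rootSum hd).trans ((m.rootSum_le hd).trans hroot)
    have i1 := (intervalIntegrable_iff_integrableOn_Ioc_of_le (zero_le_one (α := ℝ))).2
      (integrable_rpow_two_thirds hr)
    have i2 := (intervalIntegrable_iff_integrableOn_Ioc_of_le (zero_le_one (α := ℝ))).2
      (integrable_rpow_two_thirds hd)
    have i3 := (intervalIntegrable_iff_integrableOn_Ioc_of_le (zero_le_one (α := ℝ))).2
      (integrable_rpow_two_thirds hg2)
    have h2 := intervalIntegral.integral_mono_on zero_le_one i3 (i1.add i2) fun t _ => by
      have h3 : |g t| ≤ |r t| + |r t - g t| := by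
        have := abs_sub_abs_le_abs_sub (g t) (r t)
        rw [abs_sub_comm] at this
        linarith
      exact (Real.rpow_le_rpow (abs_nonneg _) h3 (by norm_num)).trans
        (Real.rpow_add_le_add_rpow (abs_nonneg _) (abs_nonneg _) (by norm_num) (by norm_num))
    rw [intervalIntegral.integral_add i1 i2] at h2
    linarith
  linarith

lemma restrict_Ioo_eq : volume.restrict (Set.Ioo (0:ℝ) 1) = unitVol :=
  Measure.restrict_congr_set Ioo_ae_eq_Ioc

lemma integral_eq_unitVol (g : ℝ → ℝ) : ∫ t in (0:ℝ)..1, g t = ∫ t, g t ∂unitVol :=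
  intervalIntegral.integral_of_le zero_le_one

lemma intervalIntegrable_iff_unitVol {g : ℝ → ℝ} :
    IntervalIntegrable g volume 0 1 ↔ Integrable g unitVol :=
  intervalIntegrable_iff_integrableOn_Ioc_of_le zero_le_one

lemma ae_mem_Ioc : ∀ᵐ t ∂unitVol, t ∈ Set.Ioc (0:ℝ) 1 := ae_restrict_mem measurableSet_Ioc

lemma exists_bound_of_memLp_top {g : ℝ → ℝ} (hg : MemLp g ⊤ unitVol) :
    ∃ M : ℝ, ∀ᵐ t ∂unitVol, |g t| ≤ M := by
  have h := hg.2
  rw [eLpNorm_exponent_top] at h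
  refine ⟨(eLpNormEssSup g unitVol).toReal, ?_⟩
  filter_upwards [ae_le_eLpNormEssSup (f := g) (μ := unitVol)] with t ht
  have := ENNReal.toReal_mono h.ne ht
  simpa using this

lemma memLp_top_of_bdd {g : ℝ → ℝ} (hg : Measurable g)
    (h : ∃ M : ℝ, ∀ᵐ x ∂(volume.restrict (Set.Ioo (0:ℝ) 1)), |g x| ≤ M) : MemLp g ⊤ unitVol := by
  rw [restrict_Ioo_eq] at h
  obtain ⟨M, hM⟩ := h
  exact memLp_top_of_bound hg.aestronglyMeasurable M hM

lemma memLp_top_of_continuousOn {g : ℝ → ℝ} (hg : ContinuousOn g (Set.Icc 0 1)) :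
    MemLp g ⊤ unitVol := by
  obtain ⟨M, hM⟩ := isCompact_Icc.exists_bound_of_continuousOn hg
  refine memLp_top_of_bound
    ((hg.mono Set.Ioc_subset_Icc_self).aestronglyMeasurable measurableSet_Ioc) M ?_
  filter_upwards [ae_mem_Ioc] with t ht using hM t (Set.Ioc_subset_Icc_self ht)

lemma continuousOn_of_ftc {g g' : ℝ → ℝ} (hg' : IntervalIntegrable g' volume 0 1)
    (h : ∀ x ∈ Set.Icc (0:ℝ) 1, g x = g 0 + ∫ t in (0:ℝ)..x, g' t) :
    ContinuousOn g (Set.Icc 0 1) := by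
  have h1 := intervalIntegral.continuousOn_primitive_interval' hg' Set.left_mem_uIcc
  rw [Set.uIcc_of_le zero_le_one] at h1
  exact (continuousOn_const.add h1).congr h

lemma memLp_top_mul {g k : ℝ → ℝ} {p : ENNReal} (hg : MemLp g ⊤ unitVol) (hk : MemLp k p unitVol) :
    MemLp (fun t => g t * k t) p unitVol := hk.mul hg

lemma integrable_mul_two {g k : ℝ → ℝ} (hg : MemLp g 2 unitVol) (hk : MemLp k 2 unitVol) :
    Integrable (fun t => g t * k t) unitVol := hg.integrable_mul hk

namespace H1

variable (u v : H1)

lemma memLp_dval : MemLp u.dval 2 unitVol :=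
  (memLp_two_iff_integrable_sq u.dval_meas.aestronglyMeasurable).2
    (intervalIntegrable_iff_unitVol.1 u.dval_sq_int)

lemma memLp_val_top : MemLp u.val ⊤ unitVol :=
  memLp_top_of_continuousOn (continuousOn_of_ftc u.dval_int u.ftc)

lemma memLp_val : MemLp u.val 2 unitVol := u.memLp_val_top.mono_exponent le_top

/-- The difference of two `H¹` functions. -/
def sub : H1 where
  val t := u.val t - v.val t
  dval t := u.dval t - v.dval t
  dval_meas := u.dval_meas.sub v.dval_meas
  dval_int := u.dval_int.sub v.dval_int
  dval_sq_int := intervalIntegrable_iff_unitVol.2 (u.memLp_dval.sub v.memLp_dval).integrable_sq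
  ftc x hx := by
    have hs : Set.uIcc 0 x ⊆ Set.uIcc (0:ℝ) 1 := by
      rw [Set.uIcc_of_le hx.1, Set.uIcc_of_le zero_le_one]
      exact Set.Icc_subset_Icc_right hx.2
    rw [intervalIntegral.integral_sub (u.dval_int.mono_set hs) (v.dval_int.mono_set hs),
      u.ftc x hx, v.ftc x hx]
    ring

lemma val_sq_le (h0 : v.val 0 = 0) {x : ℝ} (hx : x ∈ Set.Icc (0:ℝ) 1) :
    v.val x ^ 2 ≤ ∫ t in (0:ℝ)..1, v.dval t ^ 2 := by
  have hs : Set.uIcc 0 x ⊆ Set.uIcc (0:ℝ) 1 := by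
    rw [Set.uIcc_of_le hx.1, Set.uIcc_of_le zero_le_one]
    exact Set.Icc_subset_Icc_right hx.2
  rw [v.ftc x hx, h0, zero_add]
  refine (sq_integral_le hx.1 (v.dval_int.mono_set hs) (v.dval_sq_int.mono_set hs)).trans ?_
  have h1 : ∫ t in (0:ℝ)..x, v.dval t ^ 2 ≤ ∫ t in (0:ℝ)..1, v.dval t ^ 2 :=
    intervalIntegral.integral_mono_interval le_rfl hx.1 hx.2
      (Filter.Eventually.of_forall fun t => sq_nonneg _) v.dval_sq_int
  have h2 : 0 ≤ ∫ t in (0:ℝ)..x, v.dval t ^ 2 :=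
    intervalIntegral.integral_nonneg hx.1 fun t _ => sq_nonneg _
  nlinarith [hx.1, hx.2]

end H1

/-- Integration by parts: `∫ (b' v² + 2 b v v') = 0` when `v` vanishes at both ends. -/
lemma integral_deriv_mul_sq {b b' : ℝ → ℝ} (hb' : IntervalIntegrable b' volume 0 1)
    (hb : ∀ x ∈ Set.Icc (0:ℝ) 1, b x = b 0 + ∫ t in (0:ℝ)..x, b' t) (v : H1)
    (h0 : v.val 0 = 0) (h1 : v.val 1 = 0) :
    ∫ t in (0:ℝ)..1, (b' t * v.val t ^ 2 + 2 * (b t * v.dval t * v.val t)) = 0 := by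
  set F : ℝ → ℝ := fun x => ∫ t in (0:ℝ)..x, b' t
  set V : ℝ → ℝ := fun x => ∫ t in (0:ℝ)..x, v.dval t
  have hz : (0:ℝ) ∈ Set.uIcc (0:ℝ) 1 := Set.left_mem_uIcc
  have hF : AbsolutelyContinuousOnInterval F 0 1 :=
    hb'.absolutelyContinuousOnInterval_intervalIntegral hz
  have hV : AbsolutelyContinuousOnInterval V 0 1 :=
    v.dval_int.absolutelyContinuousOnInterval_intervalIntegral hz
  have hc : AbsolutelyContinuousOnInterval (fun _ : ℝ => b 0) 0 1 :=
    (contDiff_const : ContDiff ℝ 1 fun _ : ℝ => b 0).contDiffOn.absolutelyContinuousOnInterval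
  have hI := (((hc.add hF).mul hV).mul hV).integral_deriv_eq_sub
  have hV1 : V 1 = 0 := by
    have := v.ftc 1 (by simp)
    rw [h0, h1, zero_add] at this
    exact this.symm
  have hV0 : V 0 = 0 := intervalIntegral.integral_same
  simp only [Pi.mul_apply, hV1, hV0, mul_zero, sub_zero] at hI
  refine Eq.trans (intervalIntegral.integral_congr_ae ?_) hI
  filter_upwards [hb'.ae_hasDerivAt_integral, v.dval_int.ae_hasDerivAt_integral] with t ht1 ht2 ht
  have ht' : t ∈ Set.uIcc (0:ℝ) 1 := Set.uIoc_subset_uIcc ht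
  have d1 := ht1 ht' 0 hz
  have d2 := ht2 ht' 0 hz
  have hd : HasDerivAt (((fun _ : ℝ => b 0) + F) * V * V)
      (((0 + b' t) * V t + (b 0 + F t) * v.dval t) * V t + ((b 0 + F t) * V t) * v.dval t) t :=
    ((((hasDerivAt_const t (b 0)).add d1).mul d2).mul d2)
  rw [hd.deriv]
  rw [Set.uIcc_of_le zero_le_one] at ht'
  have e1 : v.val t = V t := by rw [v.ftc t ht', h0, zero_add]
  rw [e1, hb t ht']
  ring

namespace Coeffs

variable (P : Coeffs)

lemma memLp_a : MemLp P.a ⊤ unitVol :=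
  memLp_top_of_continuousOn (continuousOn_of_ftc P.a'_int P.ftc_a)

lemma memLp_b : MemLp P.b ⊤ unitVol :=
  memLp_top_of_continuousOn (continuousOn_of_ftc P.b'_int P.ftc_b)

lemma memLp_c : MemLp P.c ⊤ unitVol := memLp_top_of_bdd P.c_meas P.c_bdd

lemma memLp_a' : MemLp P.a' ⊤ unitVol := memLp_top_of_bdd P.a'_meas P.a'_bdd

lemma memLp_b' : MemLp P.b' ⊤ unitVol := memLp_top_of_bdd P.b'_meas P.b'_bdd

lemma exists_bound : ∃ M : ℝ, 0 < M ∧ ∀ᵐ t ∂unitVol,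
    |P.a t| ≤ M ∧ |P.b t| ≤ M ∧ |P.c t| ≤ M ∧ |P.a' t| ≤ M := by
  obtain ⟨A, hA⟩ := exists_bound_of_memLp_top P.memLp_a
  obtain ⟨B, hB⟩ := exists_bound_of_memLp_top P.memLp_b
  obtain ⟨C, hC⟩ := exists_bound_of_memLp_top P.memLp_c
  obtain ⟨A', hA'⟩ := exists_bound_of_memLp_top P.memLp_a'
  refine ⟨|A| + |B| + |C| + |A'| + 1, by positivity, ?_⟩
  filter_upwards [hA, hB, hC, hA'] with t h1 h2 h3 h4
  have := le_abs_self A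
  have := le_abs_self B
  have := le_abs_self C
  have := le_abs_self A'
  have := abs_nonneg A
  have := abs_nonneg B
  have := abs_nonneg C
  have := abs_nonneg A'
  refine ⟨?_, ?_, ?_, ?_⟩ <;> linarith

lemma integrable_a_term (u v : H1) : Integrable (fun t => P.a t * u.dval t * v.dval t) unitVol :=
  integrable_mul_two (memLp_top_mul P.memLp_a u.memLp_dval) v.memLp_dval

lemma integrable_b_term (u v : H1) : Integrable (fun t => P.b t * u.dval t * v.val t) unitVol :=
  integrable_mul_two (memLp_top_mul P.memLp_b u.memLp_dval) v.memLp_val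

lemma integrable_c_term (u v : H1) : Integrable (fun t => P.c t * u.val t * v.val t) unitVol :=
  integrable_mul_two (memLp_top_mul P.memLp_c u.memLp_val) v.memLp_val

lemma integrable_B (u v : H1) : Integrable (fun t => P.a t * u.dval t * v.dval t
    + P.b t * u.dval t * v.val t + P.c t * u.val t * v.val t) unitVol :=
  ((P.integrable_a_term u v).add (P.integrable_b_term u v)).add (P.integrable_c_term u v)

lemma B_sub_left (u v w : H1) : P.B (u.sub v) w = P.B u w - P.B v w := by
  simp only [B, integral_eq_unitVol]
  rw [← integral_sub (P.integrable_B u w) (P.integrable_B v w)]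
  refine integral_congr_ae (Filter.Eventually.of_forall fun t => ?_)
  simp only [H1.sub]
  ring

lemma B_sub_right (u v w : H1) : P.B w (u.sub v) = P.B w u - P.B w v := by
  simp only [B, integral_eq_unitVol]
  rw [← integral_sub (P.integrable_B w u) (P.integrable_B w v)]
  refine integral_congr_ae (Filter.Eventually.of_forall fun t => ?_)
  simp only [H1.sub]
  ring

lemma coercive (v : H1) (h0 : v.val 0 = 0) (h1 : v.val 1 = 0) :
    P.a0 * ∫ t in (0:ℝ)..1, v.dval t ^ 2 ≤ P.B v v := by
  have hp := integral_deriv_mul_sq P.b'_int P.ftc_b v h0 h1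
  rw [integral_eq_unitVol] at hp
  have hi : Integrable (fun t => P.b' t * v.val t ^ 2 + 2 * (P.b t * v.dval t * v.val t))
      unitVol := by
    refine Integrable.add ?_ ((P.integrable_b_term v v).const_mul 2)
    refine (integrable_mul_two (memLp_top_mul P.memLp_b' v.memLp_val) v.memLp_val).congr
      (Filter.Eventually.of_forall fun t => ?_)
    simp only
    ring
  have hB : P.B v v = ∫ t, ((P.a t * v.dval t * v.dval t
      + P.b t * v.dval t * v.val t + P.c t * v.val t * v.val t)
      - 1 / 2 * (P.b' t * v.val t ^ 2 + 2 * (P.b t * v.dval t * v.val t))) ∂unitVol := by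
    rw [integral_sub (P.integrable_B v v) (hi.const_mul _), integral_const_mul, hp, B,
      integral_eq_unitVol]
    ring
  rw [hB, integral_eq_unitVol, ← integral_const_mul]
  refine integral_mono_ae (v.memLp_dval.integrable_sq.const_mul _)
    ((P.integrable_B v v).sub (hi.const_mul _)) ?_
  have hcb := P.cb_nonneg
  rw [restrict_Ioo_eq] at hcb
  filter_upwards [hcb, ae_mem_Ioc] with t ht ht'
  have ha := P.a_lb t (Set.Ioc_subset_Icc_self ht')
  nlinarith [mul_nonneg (sub_nonneg.2 ha) (sq_nonneg (v.dval t)),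
    mul_nonneg ht (sq_nonneg (v.val t))]

/-- Continuity of the bilinear form combined with Young's inequality. -/
lemma B_le {M : ℝ} (hM : ∀ᵐ t ∂unitVol, |P.a t| ≤ M ∧ |P.b t| ≤ M ∧ |P.c t| ≤ M ∧ |P.a' t| ≤ M)
    (hM0 : 0 < M) (e w : H1) (he : e.val 0 = 0) (hw : w.val 0 = 0) {δ : ℝ} (hδ : 0 < δ) :
    P.B e w ≤ 3 * δ * (∫ t in (0:ℝ)..1, e.dval t ^ 2)
      + 3 * (M ^ 2 / (4 * δ)) * ∫ t in (0:ℝ)..1, w.dval t ^ 2 := by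
  set E := ∫ t in (0:ℝ)..1, e.dval t ^ 2 with hE
  set W := ∫ t in (0:ℝ)..1, w.dval t ^ 2 with hW
  set K := M ^ 2 / (4 * δ) with hK
  have young : ∀ m x y : ℝ, |m| ≤ M → m * x * y ≤ δ * x ^ 2 + K * y ^ 2 := by
    intro m x y hm
    have h1 : δ * x ^ 2 + K * y ^ 2 - M * |x| * |y| = δ * (|x| - M / (2 * δ) * |y|) ^ 2 := by
      rw [← sq_abs x, ← sq_abs y, hK]
      field_simp
      ring
    have h2 : m * x * y ≤ M * |x| * |y| := by
      calc m * x * y ≤ |m * x * y| := le_abs_self _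
        _ = |m| * (|x| * |y|) := by rw [abs_mul, abs_mul, mul_assoc]
        _ ≤ M * (|x| * |y|) := by gcongr
        _ = M * |x| * |y| := by ring
    have h3 : 0 ≤ δ * (|x| - M / (2 * δ) * |y|) ^ 2 := by positivity
    linarith
  have hKp : 0 ≤ K := by positivity
  have i1 := e.memLp_dval.integrable_sq
  have i2 := w.memLp_dval.integrable_sq
  have hb : P.B e w ≤ ∫ t, ((2 * δ * e.dval t ^ 2 + K * w.dval t ^ 2) + (δ * E + 2 * K * W))
      ∂unitVol := by
    rw [B, integral_eq_unitVol]
    refine integral_mono_ae (P.integrable_B e w)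
      (((i1.const_mul _).add (i2.const_mul _)).add (integrable_const _)) ?_
    filter_upwards [hM, ae_mem_Ioc] with t ht ht'
    have ht' := Set.Ioc_subset_Icc_self ht'
    have h1 := young _ (e.dval t) (w.dval t) ht.1
    have h2 := young _ (e.dval t) (w.val t) ht.2.1
    have h3 := young _ (e.val t) (w.val t) ht.2.2.1
    have h4 := mul_le_mul_of_nonneg_left (e.val_sq_le he ht') hδ.le
    have h5 := mul_le_mul_of_nonneg_left (w.val_sq_le hw ht') hKp
    linarith
  have i3 : Integrable (fun t => 2 * δ * e.dval t ^ 2 + K * w.dval t ^ 2) unitVol :=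
    (i1.const_mul _).add (i2.const_mul _)
  rw [integral_add i3 (integrable_const _), integral_add (i1.const_mul _) (i2.const_mul _),
    integral_const_mul, integral_const_mul,
    ← integral_eq_unitVol, ← integral_eq_unitVol, ← hE, ← hW, integral_const] at hb
  simp at hb
  linarith

/-- Céa's lemma in the `H¹` seminorm. -/
lemma cea {M : ℝ} (hM : ∀ᵐ t ∂unitVol, |P.a t| ≤ M ∧ |P.b t| ≤ M ∧ |P.c t| ≤ M ∧ |P.a' t| ≤ M)
    (hM0 : 0 < M) {f : ℝ → ℝ} {u uh : H1} (hu : P.IsWeakSolution f u) {N : ℕ} {m : Mesh N}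
    (huh : P.IsFESolution f m uh) {w : H1} (hw0 : w.val 0 = 0) (hw1 : w.val 1 = 0)
    (hw : m.IsPL w) :
    ∫ t in (0:ℝ)..1, (u.sub uh).dval t ^ 2
      ≤ 9 * M ^ 2 / P.a0 ^ 2 * ∫ t in (0:ℝ)..1, (u.sub w).dval t ^ 2 := by
  obtain ⟨hu0, hu1, hu⟩ := hu
  obtain ⟨huh0, huh1, hPL, huh⟩ := huh
  set e := u.sub uh with he
  have ha := P.a0_pos
  have e0 : e.val 0 = 0 := by simp [he, H1.sub, hu0, huh0]
  have e1 : e.val 1 = 0 := by simp [he, H1.sub, hu1, huh1]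
  have s0 : (u.sub w).val 0 = 0 := by simp [H1.sub, hu0, hw0]
  have orth : ∀ v : H1, v.val 0 = 0 → v.val 1 = 0 → m.IsPL v → P.B e v = 0 := by
    intro v h0 h1 hv
    rw [he, P.B_sub_left, hu v h0 h1, huh v h0 h1 hv, sub_self]
  have hee : P.B e e = P.B e (u.sub w) := by
    have h : P.B e e = P.B e u - P.B e uh := P.B_sub_right u uh e
    rw [h, P.B_sub_right, orth w hw0 hw1 hw, orth uh huh0 huh1 hPL]
  have h1 := P.coercive e e0 e1
  have h2 := P.B_le hM hM0 e (u.sub w) e0 s0 (δ := P.a0 / 6) (by positivity)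
  rw [hee] at h1
  set E := ∫ t in (0:ℝ)..1, e.dval t ^ 2
  set W := ∫ t in (0:ℝ)..1, (u.sub w).dval t ^ 2
  have h3 : P.a0 / 2 * E ≤ P.a0 / 2 * (9 * M ^ 2 / P.a0 ^ 2 * W) := by
    have : P.a0 / 2 * (9 * M ^ 2 / P.a0 ^ 2 * W) = 3 * (M ^ 2 / (4 * (P.a0 / 6))) * W := by
      field_simp
      ring
    linarith
  exact le_of_mul_le_mul_left h3 (by positivity)

end Coeffs

namespace Mesh

variable {N : ℕ} (m : Mesh N)

/-- The step function taking the value `s i` inside the `i`-th element. -/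
def step (s : ℕ → ℝ) (t : ℝ) : ℝ :=
  ∑ i ∈ Finset.range N, (Set.Ioo (m.x i) (m.x (i + 1))).indicator (fun _ => s i) t

lemma step_eq (s : ℕ → ℝ) {i : ℕ} (hi : i < N) {t : ℝ}
    (ht : t ∈ Set.Ioo (m.x i) (m.x (i + 1))) : m.step s t = s i := by
  rw [step, Finset.sum_eq_single i]
  · exact Set.indicator_of_mem ht _
  · intro j hj hji
    have hj := Finset.mem_range.1 hj
    refine Set.indicator_of_notMem (fun h => ?_) _
    rcases lt_or_gt_of_ne hji with h' | h'
    · exact absurd (m.x_le (i := j + 1) (j := i) h' hi.le) (not_le.2 (ht.1.trans h.2))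
    · exact absurd (m.x_le (i := i + 1) (j := j) h' hj.le) (not_le.2 (h.1.trans ht.2))
  · exact fun h => absurd (Finset.mem_range.2 hi) h

lemma measurable_step (s : ℕ → ℝ) : Measurable (m.step s) :=
  Finset.measurable_sum _ fun _ _ => measurable_const.indicator measurableSet_Ioo

lemma memLp_step (s : ℕ → ℝ) : MemLp (m.step s) 2 unitVol :=
  memLp_finsetSum _ fun i _ => (memLp_const (s i)).indicator measurableSet_Ioo

lemma integral_congr_element {g k : ℝ → ℝ} {i : ℕ} (hi : i < N)
    (h : ∀ t ∈ Set.Ioo (m.x i) (m.x (i + 1)), g t = k t) :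
    ∫ t in (m.x i)..(m.x (i + 1)), g t = ∫ t in (m.x i)..(m.x (i + 1)), k t := by
  rw [intervalIntegral.integral_of_le (m.x_mono i hi).le,
    intervalIntegral.integral_of_le (m.x_mono i hi).le, integral_Ioc_eq_integral_Ioo,
    integral_Ioc_eq_integral_Ioo]
  exact setIntegral_congr_fun measurableSet_Ioo h

/-- The mean value of `u'` over the `i`-th element. -/
def slope (u : H1) (i : ℕ) : ℝ := (m.h i)⁻¹ * ∫ t in (m.x i)..(m.x (i + 1)), u.dval t

/-- The piecewise linear interpolant of `u`. -/
def interp (u : H1) : H1 where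
  val x := u.val 0 + ∫ t in (0:ℝ)..x, m.step (m.slope u) t
  dval := m.step (m.slope u)
  dval_meas := m.measurable_step _
  dval_int := intervalIntegrable_iff_unitVol.2 ((m.memLp_step _).integrable (by norm_num))
  dval_sq_int := intervalIntegrable_iff_unitVol.2 (m.memLp_step _).integrable_sq
  ftc x _ := by simp

lemma interp_isPL (u : H1) : m.IsPL (m.interp u) :=
  fun i hi => ⟨m.slope u i, fun _ ht => m.step_eq _ hi ht⟩

lemma interp_zero (u : H1) : (m.interp u).val 0 = u.val 0 := by simp [interp]

lemma interp_one (u : H1) : (m.interp u).val 1 = u.val 1 := by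
  rw [u.ftc 1 (by simp)]
  simp only [interp]
  rw [← m.sum_integral ((m.memLp_step _).integrable (by norm_num)),
    ← m.sum_integral (intervalIntegrable_iff_unitVol.1 u.dval_int)]
  congr 1
  refine Finset.sum_congr rfl fun i hi => ?_
  have hi := Finset.mem_range.1 hi
  rw [m.integral_congr_element hi fun t ht => m.step_eq _ hi ht,
    intervalIntegral.integral_const, smul_eq_mul]
  exact mul_inv_cancel_left₀ (m.h_pos hi).ne' _

lemma sub_slope_sq_le {u : H1} {u'' : ℝ → ℝ} (hint : IntervalIntegrable u'' volume 0 1)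
    (hsq : IntervalIntegrable (fun t => u'' t ^ 2) volume 0 1)
    (hftc : ∀ x ∈ Set.Icc (0:ℝ) 1, u.dval x = u.dval 0 + ∫ t in (0:ℝ)..x, u'' t)
    {i : ℕ} (hi : i < N) {t : ℝ} (ht : t ∈ Set.Ioo (m.x i) (m.x (i + 1))) :
    (u.dval t - m.slope u i) ^ 2 ≤ m.h i * ∫ s in (m.x i)..(m.x (i + 1)), u'' s ^ 2 := by
  have hlt := m.x_mono i hi
  have hp := m.h_pos hi
  set D := ∫ s in (m.x i)..(m.x (i + 1)), |u'' s| with hD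
  have hint' := m.intervalIntegrable (intervalIntegrable_iff_unitVol.1 hint) hi
  have hD0 : 0 ≤ D := intervalIntegral.integral_nonneg hlt.le fun _ _ => abs_nonneg _
  have hDsq : D ^ 2 ≤ m.h i * ∫ s in (m.x i)..(m.x (i + 1)), u'' s ^ 2 := by
    have := sq_integral_le hlt.le (g := fun s => |u'' s|) hint'.abs (by
      simpa only [sq_abs] using m.intervalIntegrable (intervalIntegrable_iff_unitVol.1 hsq) hi)
    simp only [sq_abs] at this
    exact this
  have hmem : ∀ y ∈ Set.Ioc (m.x i) (m.x (i + 1)), y ∈ Set.Icc (0:ℝ) 1 := fun y hy =>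
    Set.Ioc_subset_Icc_self (m.Ioc_subset hi hy)
  have hto : ∀ y ∈ Set.Icc (0:ℝ) 1, IntervalIntegrable u'' volume 0 y := fun y hy =>
    hint.mono_set (by
      rw [Set.uIcc_of_le hy.1, Set.uIcc_of_le zero_le_one]
      exact Set.Icc_subset_Icc_right hy.2)
  have hosc : ∀ y ∈ Set.Ioc (m.x i) (m.x (i + 1)), |u.dval t - u.dval y| ≤ D := by
    intro y hy
    have ht' := Set.Ioo_subset_Ioc_self ht
    rw [hftc t (hmem t ht'), hftc y (hmem y hy), add_sub_add_left_eq_sub,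
      intervalIntegral.integral_interval_sub_left (hto t (hmem t ht')) (hto y (hmem y hy))]
    refine (intervalIntegral.norm_integral_le_integral_norm_uIoc (f := u'')).trans ?_
    rw [hD, intervalIntegral.integral_of_le hlt.le]
    refine setIntegral_mono_set hint'.abs.1
      (Filter.Eventually.of_forall fun _ => abs_nonneg _) (Filter.Eventually.of_forall ?_)
    intro z hz
    rcases Set.mem_uIoc.1 hz with h | h
    · exact ⟨hy.1.trans h.1, h.2.trans ht'.2⟩
    · exact ⟨ht'.1.trans h.1, h.2.trans hy.2⟩
  have hmean : m.h i * (u.dval t - m.slope u i)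
      = ∫ y in (m.x i)..(m.x (i + 1)), (u.dval t - u.dval y) := by
    rw [intervalIntegral.integral_sub intervalIntegrable_const
      (m.intervalIntegrable (intervalIntegrable_iff_unitVol.1 u.dval_int) hi),
      intervalIntegral.integral_const, smul_eq_mul, mul_sub, slope, mul_inv_cancel_left₀ hp.ne']
    rfl
  have hle := intervalIntegral.norm_integral_le_of_norm_le_const
    (f := fun y => u.dval t - u.dval y) (a := m.x i) (b := m.x (i + 1)) (C := D) (fun y hy => by
      rw [Set.uIoc_of_le hlt.le] at hy
      exact hosc y hy)
  rw [← hmean, Real.norm_eq_abs, abs_mul, abs_of_pos hp] at hle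
  have hle' : |u.dval t - m.slope u i| ≤ D := by
    refine le_of_mul_le_mul_left (hle.trans_eq ?_) hp
    rw [abs_of_pos (sub_pos.2 hlt), mul_comm]
    rfl
  rw [← sq_abs]
  exact (pow_le_pow_left₀ (abs_nonneg _) hle' 2).trans hDsq

/-- Interpolation error in the `H¹` seminorm. -/
lemma interp_error {u : H1} {u'' : ℝ → ℝ} (hint : IntervalIntegrable u'' volume 0 1)
    (hsq : IntervalIntegrable (fun t => u'' t ^ 2) volume 0 1)
    (hftc : ∀ x ∈ Set.Icc (0:ℝ) 1, u.dval x = u.dval 0 + ∫ t in (0:ℝ)..x, u'' t)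
    {H : ℝ} (hH : ∀ i < N, m.h i ≤ H) :
    ∫ t in (0:ℝ)..1, (u.sub (m.interp u)).dval t ^ 2
      ≤ H ^ 2 * ∫ t in (0:ℝ)..1, u'' t ^ 2 := by
  rw [← m.sum_integral (u.sub (m.interp u)).memLp_dval.integrable_sq,
    ← m.sum_integral (intervalIntegrable_iff_unitVol.1 hsq), Finset.mul_sum]
  refine Finset.sum_le_sum fun i hi => ?_
  have hi := Finset.mem_range.1 hi
  have hlt := m.x_mono i hi
  have hp := m.h_pos hi
  have hJ : 0 ≤ ∫ s in (m.x i)..(m.x (i + 1)), u'' s ^ 2 := m.integral_sq_nonneg u'' hi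
  have h1 : ∫ t in (m.x i)..(m.x (i + 1)), (u.sub (m.interp u)).dval t ^ 2
      ≤ ∫ _ in (m.x i)..(m.x (i + 1)), m.h i * ∫ s in (m.x i)..(m.x (i + 1)), u'' s ^ 2 := by
    rw [intervalIntegral.integral_of_le hlt.le, intervalIntegral.integral_of_le hlt.le,
      integral_Ioc_eq_integral_Ioo, integral_Ioc_eq_integral_Ioo]
    refine setIntegral_mono_on ?_ (integrable_const _) measurableSet_Ioo fun t ht => ?_
    · exact (m.memLp (u.sub (m.interp u)).memLp_dval hi).integrable_sq.mono_measure
        (Measure.restrict_mono Set.Ioo_subset_Ioc_self le_rfl)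
    · have : (m.interp u).dval t = m.slope u i := m.step_eq _ hi ht
      simp only [H1.sub, this]
      exact m.sub_slope_sq_le hint hsq hftc hi ht
  rw [intervalIntegral.integral_const, smul_eq_mul, ← mul_assoc] at h1
  refine h1.trans (mul_le_mul_of_nonneg_right ?_ hJ)
  change m.h i * m.h i ≤ H ^ 2
  nlinarith [hH i hi]

end Mesh

namespace Mesh

variable {N : ℕ} (m : Mesh N)

lemma one_le_rho (g : ℝ → ℝ) (i : ℕ) : 1 ≤ m.rho g i := by
  have h : 0 ≤ (m.alpha g)⁻¹ := inv_nonneg.2 (pow_nonneg (m.rootSum_nonneg g) 3)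
  exact Real.one_le_rpow (le_add_of_nonneg_right (mul_nonneg h (sq_nonneg _))) (by norm_num)

lemma rho_le (g : ℝ → ℝ) (i : ℕ) :
    m.rho g i ≤ 1 + m.avg g i ^ ((2:ℝ)/3) / m.rootSum g := by
  have h : 0 ≤ m.alpha g := pow_nonneg (m.rootSum_nonneg g) 3
  refine (Real.rpow_add_le_add_rpow zero_le_one
    (mul_nonneg (inv_nonneg.2 h) (sq_nonneg _)) (by norm_num) (by norm_num)).trans_eq ?_
  rw [Real.one_rpow, Real.mul_rpow (inv_nonneg.2 h) (sq_nonneg _), Real.inv_rpow h, alpha_rpow,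
    ← rpow_two_thirds (m.avg_nonneg g i), div_eq_inv_mul (m.avg g i ^ _)]

lemma one_le_sigma (g : ℝ → ℝ) : 1 ≤ m.sigma g := by
  rw [← m.sum_h, sigma]
  exact Finset.sum_le_sum fun i hi =>
    le_mul_of_one_le_left (m.h_pos (Finset.mem_range.1 hi)).le (m.one_le_rho g i)

lemma sigma_le_two {g : ℝ → ℝ} (hg : 0 < m.rootSum g) : m.sigma g ≤ 2 := by
  calc m.sigma g
      ≤ ∑ i ∈ Finset.range N, (m.h i + m.h i * m.avg g i ^ ((2:ℝ)/3) / m.rootSum g) := by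
        refine Finset.sum_le_sum fun i hi => ?_
        refine (mul_le_mul_of_nonneg_right (m.rho_le g i)
          (m.h_pos (Finset.mem_range.1 hi)).le).trans_eq ?_
        ring
    _ = 1 + m.rootSum g / m.rootSum g := by
        rw [Finset.sum_add_distrib, m.sum_h, ← Finset.sum_div, ← rootSum]
    _ = 2 := by rw [div_self hg.ne']; norm_num

lemma rootSum_le_of_avg_sq_le {g : ℝ → ℝ} {K : ℝ} (h : ∀ i < N, m.avg g i ^ 2 ≤ K) :
    m.rootSum g ≤ K ^ ((1:ℝ)/3) := by
  calc m.rootSum g ≤ ∑ i ∈ Finset.range N, m.h i * K ^ ((1:ℝ)/3) := by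
        refine Finset.sum_le_sum fun i hi => ?_
        have hi := Finset.mem_range.1 hi
        rw [rpow_two_thirds (m.avg_nonneg g i)]
        exact mul_le_mul_of_nonneg_left
          (Real.rpow_le_rpow (sq_nonneg _) (h i hi) (by norm_num)) (m.h_pos hi).le
    _ = K ^ ((1:ℝ)/3) := by rw [← Finset.sum_mul, m.sum_h, one_mul]

/-- The distance of `α_h` to the continuous intensity, and the bounds on `ρ` and `σ_h`, for a
function `s` close to `r` in the elementwise averages. -/
lemma bounds_of_close {r s : ℝ → ℝ} (hr : MemLp r 2 unitVol) (hs : MemLp s 2 unitVol)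
    {L I : ℝ} (hL : ∀ᵐ t ∂unitVol, |r t| ≤ L) (hL0 : 0 ≤ L) (hI0 : 0 < I)
    (hI : ∫ t in (0:ℝ)..1, |r t| ^ ((2:ℝ)/3) = I) (hrs : m.rootSum r ≤ I + I / 4)
    (hLd : ∀ i < N, m.avg (fun t => s t - r t) i ^ 2 ≤ L ^ 2)
    (hId : ∀ i < N, m.avg (fun t => s t - r t) i ^ 2 ≤ (I / 4) ^ 3) :
    1 / 2 * I ≤ m.rootSum s ∧ m.rootSum s ≤ 3 / 2 * I ∧
      ∀ i < N, m.rho s i ≤ (1 + 4 * (L ^ ((2:ℝ)/3) / I)) ^ 2 := by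
  have hd : MemLp (fun t => s t - r t) 2 unitVol := hs.sub hr
  have hdI : m.rootSum (fun t => s t - r t) ≤ I / 4 := by
    refine (m.rootSum_le_of_avg_sq_le hId).trans_eq ?_
    rw [← Real.rpow_natCast, ← Real.rpow_mul (by positivity)]
    norm_num
  have hupper : m.rootSum s ≤ m.rootSum r + m.rootSum (fun t => s t - r t) := by
    simpa only [add_sub_cancel] using m.rootSum_add_le hr hd
  have hlower : m.rootSum r ≤ m.rootSum s + m.rootSum (fun t => s t - r t) := by
    have h := m.rootSum_add_le hs (hr.sub hs)
    have e := m.rootSum_neg (fun t => s t - r t)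
    simp only [Pi.sub_apply, neg_sub, add_sub_cancel] at h e
    rw [← e]
    exact h
  have hIr := m.le_rootSum hr
  rw [hI] at hIr
  have h1 : 1 / 2 * I ≤ m.rootSum s := by linarith
  refine ⟨h1, by linarith, fun i hi => ?_⟩
  have havg : m.avg s i ≤ 2 * L := by
    have h := m.avg_add_le hr hd hi
    simp only [add_sub_cancel] at h
    linarith [m.avg_le_of_abs_le hr hL hi hL0,
      (sq_le_sq₀ (m.avg_nonneg _ i) hL0).1 (hLd i hi)]
  have hp : m.avg s i ^ ((2:ℝ)/3) ≤ 2 * L ^ ((2:ℝ)/3) := by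
    refine (Real.rpow_le_rpow (m.avg_nonneg _ i) havg (by norm_num)).trans ?_
    rw [Real.mul_rpow zero_le_two hL0]
    refine mul_le_mul_of_nonneg_right ?_ (Real.rpow_nonneg hL0 _)
    simpa using Real.rpow_le_rpow_of_exponent_le one_le_two (show (2:ℝ)/3 ≤ 1 by norm_num)
  have hq0 : 0 ≤ L ^ ((2:ℝ)/3) := Real.rpow_nonneg hL0 _
  have hq : m.avg s i ^ ((2:ℝ)/3) / m.rootSum s ≤ 4 * (L ^ ((2:ℝ)/3) / I) := by
    calc m.avg s i ^ ((2:ℝ)/3) / m.rootSum s ≤ 2 * L ^ ((2:ℝ)/3) / (1 / 2 * I) := by gcongr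
      _ = 4 * (L ^ ((2:ℝ)/3) / I) := by ring
  have hqn : 0 ≤ L ^ ((2:ℝ)/3) / I := by positivity
  nlinarith [m.rho_le s i]

end Mesh

namespace Coeffs

variable (P : Coeffs)

lemma memLp_res {f : ℝ → ℝ} (hf : MemLp f 2 unitVol) (w : H1) : MemLp (P.res f w) 2 unitVol :=
  ((hf.add (memLp_top_mul P.memLp_a' w.memLp_dval)).sub
    (memLp_top_mul P.memLp_b w.memLp_dval)).sub (memLp_top_mul P.memLp_c w.memLp_val)

lemma memLp_top_res {f : ℝ → ℝ} (hf : MemLp f ⊤ unitVol) {w : H1} (hw : MemLp w.dval ⊤ unitVol) :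
    MemLp (P.res f w) ⊤ unitVol :=
  ((hf.add (memLp_top_mul P.memLp_a' hw)).sub
    (memLp_top_mul P.memLp_b hw)).sub (memLp_top_mul P.memLp_c w.memLp_val_top)

lemma integral_res_sub_sq_le {M : ℝ}
    (hM : ∀ᵐ t ∂unitVol, |P.a t| ≤ M ∧ |P.b t| ≤ M ∧ |P.c t| ≤ M ∧ |P.a' t| ≤ M)
    {f : ℝ → ℝ} (hf : MemLp f 2 unitVol) (u w : H1)
    (h0 : (u.sub w).val 0 = 0) :
    ∫ t in (0:ℝ)..1, (P.res f w t - P.res f u t) ^ 2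
      ≤ 10 * M ^ 2 * ∫ t in (0:ℝ)..1, (u.sub w).dval t ^ 2 := by
  set E := ∫ t in (0:ℝ)..1, (u.sub w).dval t ^ 2 with hE
  have hi := (u.sub w).memLp_dval.integrable_sq.const_mul (8 * M ^ 2)
  have hle : ∫ t in (0:ℝ)..1, (P.res f w t - P.res f u t) ^ 2
      ≤ ∫ t, (8 * M ^ 2 * (u.sub w).dval t ^ 2 + 2 * M ^ 2 * E) ∂unitVol := by
    rw [integral_eq_unitVol]
    refine integral_mono_ae ((P.memLp_res hf w).sub (P.memLp_res hf u)).integrable_sq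
      (hi.add (integrable_const _)) ?_
    filter_upwards [hM, ae_mem_Ioc] with t ht ht'
    obtain ⟨-, hb, hc, ha'⟩ := ht
    have hv := (u.sub w).val_sq_le h0 (Set.Ioc_subset_Icc_self ht')
    rw [← hE] at hv
    set e := (u.sub w).val t with he
    set e' := (u.sub w).dval t with he'
    have hd : P.res f w t - P.res f u t = -((P.a' t - P.b t) * e' - P.c t * e) := by
      simp only [res, he, he', H1.sub]
      ring
    have hab : (P.a' t - P.b t) ^ 2 ≤ (2 * M) ^ 2 := by
      refine sq_le_sq' ?_ ?_ <;> linarith [abs_le.1 hb, abs_le.1 ha']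
    have hc2 : P.c t ^ 2 ≤ M ^ 2 := sq_le_sq' (abs_le.1 hc).1 (abs_le.1 hc).2
    have k1 := mul_le_mul_of_nonneg_right hab (sq_nonneg e')
    have k2 := mul_le_mul hc2 hv (sq_nonneg _) (sq_nonneg M)
    rw [hd]
    linarith [sq_nonneg ((P.a' t - P.b t) * e' + P.c t * e)]
  rw [integral_add hi (integrable_const _), integral_const_mul, ← integral_eq_unitVol, ← hE,
    integral_const] at hle
  simp only [measureReal_restrict_apply_univ, Real.volume_real_Ioc_of_le zero_le_one, sub_zero,
    one_smul] at hle
  linarith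

end Coeffs

/-- The residual of the finite element solution converges to that of the weak solution in the
elementwise averages. -/
lemma Coeffs.exists_avg_res_sub_sq_le (P : Coeffs) {f : ℝ → ℝ} (hf : MemLp f 2 unitVol) {u : H1}
    (hu : P.IsWeakSolution f u) (hu2 : u.IsH2) {ρ : ℝ} (hρ : 0 < ρ) :
    ∃ C : ℝ, ∀ N : ℕ, 0 < N → ∀ m : Mesh N, m.InS ρ → ∀ uh : H1, P.IsFESolution f m uh →
      ∀ i < N, m.avg (fun t => P.res f uh t - P.res f u t) i ^ 2 ≤ C / N := by
  obtain ⟨u'', -, hint, hsq, hftc⟩ := hu2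
  obtain ⟨M, hM0, hM⟩ := P.exists_bound
  have ha := P.a0_pos
  set U := ∫ t in (0:ℝ)..1, u'' t ^ 2
  refine ⟨ρ * (10 * M ^ 2 * (9 * M ^ 2 / P.a0 ^ 2 * (4 * U))), fun N hN m hm uh huh i hi => ?_⟩
  have hN' : (0:ℝ) < N := Nat.cast_pos.2 hN
  have hE := P.cea hM hM0 hu huh ((m.interp_zero u).trans hu.1)
    ((m.interp_one u).trans hu.2.1) (m.interp_isPL u)
  have hI := m.interp_error hint hsq hftc fun i hi => (hm i hi).2
  have hR := P.integral_res_sub_sq_le hM hf u uh (by simp [H1.sub, hu.1, huh.1])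
  have hd : Integrable (fun t => (P.res f uh t - P.res f u t) ^ 2) unitVol :=
    ((P.memLp_res hf uh).sub (P.memLp_res hf u)).integrable_sq
  have hK : ∫ t in (m.x i)..(m.x (i + 1)), (P.res f uh t - P.res f u t) ^ 2
      ≤ ∫ t in (0:ℝ)..1, (P.res f uh t - P.res f u t) ^ 2 := by
    rw [integral_eq_unitVol, intervalIntegral.integral_of_le (m.x_mono i hi).le]
    exact setIntegral_mono_set hd (Filter.Eventually.of_forall fun _ => sq_nonneg _)
      (Filter.Eventually.of_forall (m.Ioc_subset hi))
  have hh : 1 / m.h i ≤ ρ * N := by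
    rw [one_div_le (m.h_pos hi) (by positivity)]
    exact (hm i hi).1
  rw [m.avg_sq _ hi]
  calc 1 / m.h i * ∫ t in (m.x i)..(m.x (i + 1)), (P.res f uh t - P.res f u t) ^ 2
      ≤ ρ * N * (10 * M ^ 2 * (9 * M ^ 2 / P.a0 ^ 2 * ((2 / N) ^ 2 * U))) := by
        refine mul_le_mul hh (hK.trans (hR.trans ?_)) (m.integral_sq_nonneg _ hi) (by positivity)
        gcongr
        exact hE.trans (by gcongr)
    _ = ρ * (10 * M ^ 2 * (9 * M ^ 2 / P.a0 ^ 2 * (4 * U))) / N := by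
        field_simp
        ring

lemma ae_abs_le_Linf {r : ℝ → ℝ} (hr : MemLp r ⊤ unitVol) : ∀ᵐ t ∂unitVol, |r t| ≤ Linf r := by
  obtain ⟨B, hB⟩ := exists_bound_of_memLp_top hr
  rw [Linf, restrict_Ioo_eq]
  exact ae_le_essSup (Filter.isBoundedUnder_of_eventually_le hB)

lemma Linf_nonneg {r : ℝ → ℝ} (hr : MemLp r ⊤ unitVol) : 0 ≤ Linf r := by
  have : NeZero unitVol := ⟨by simp [unitVol]⟩
  obtain ⟨t, ht⟩ := (ae_abs_le_Linf hr).exists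
  exact (abs_nonneg _).trans ht

lemma integral_rpow_pos {r : ℝ → ℝ} (hr : MemLp r 2 unitVol) (h : ¬ ∀ᵐ t ∂unitVol, r t = 0) :
    0 < ∫ t in (0:ℝ)..1, |r t| ^ ((2:ℝ)/3) := by
  rw [integral_eq_unitVol]
  have h0 : ∀ t, 0 ≤ |r t| ^ ((2:ℝ)/3) := fun t => Real.rpow_nonneg (abs_nonneg _) _
  refine lt_of_le_of_ne (integral_nonneg h0) fun hz => h ?_
  have hz := (integral_eq_zero_iff_of_nonneg h0 (integrable_rpow_two_thirds hr)).1 hz.symm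
  filter_upwards [hz] with t ht
  exact abs_eq_zero.1 ((Real.rpow_eq_zero (abs_nonneg _) (by norm_num)).1 ht)

/-- bounds on α_h, ρ and σ_h on meshes in S_N with
ρ₀ = (1 + γ (‖r‖_∞/‖r‖_{2/3})^{2/3})² (Lemma 6.0). -/
theorem statement17 (P : Coeffs) :
    ∃ γ : ℝ, 0 < γ ∧
      ∀ f : ℝ → ℝ, MemLinf f → MemL2 f →
      ∀ u : H1, P.IsWeakSolution f u → u.IsH2 →
      ¬ (∀ᵐ x ∂(volume.restrict (Set.Ioo (0:ℝ) 1)), P.res f u x = 0) →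
      ∃ N₀ : ℕ, ∀ N : ℕ, N₀ ≤ N →
        ∀ m : Mesh N,
          m.InS ((1 + γ * (Linf (P.res f u) / Lp23 (P.res f u)) ^ ((2:ℝ)/3))^2) →
          ∀ uh : H1, P.IsFESolution f m uh →
            (1/2) * (Lp23 (P.res f u)) ^ ((2:ℝ)/3)
                ≤ (m.alpha (P.res f uh)) ^ ((1:ℝ)/3) ∧
            (m.alpha (P.res f uh)) ^ ((1:ℝ)/3)
                ≤ (3/2) * (Lp23 (P.res f u)) ^ ((2:ℝ)/3) ∧
            (∀ i < N, 1 ≤ m.rho (P.res f uh) i ∧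
              m.rho (P.res f uh) i
                ≤ (1 + γ * (Linf (P.res f u) / Lp23 (P.res f u)) ^ ((2:ℝ)/3))^2) ∧
            1 ≤ m.sigma (P.res f uh) ∧ m.sigma (P.res f uh) ≤ 2 := by
  refine ⟨4, by norm_num, fun f hfb hf2 u hu hu2 hne => ?_⟩
  have hf : MemLp f ⊤ unitVol := memLp_top_of_bdd hfb.1 hfb.2
  have hfL2 : MemLp f 2 unitVol := hf.mono_exponent le_top
  have hdv : MemLp u.dval ⊤ unitVol := by
    obtain ⟨u'', -, hint, -, hftc⟩ := hu2
    exact memLp_top_of_continuousOn (continuousOn_of_ftc hint hftc)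
  have hrb : MemLp (P.res f u) ⊤ unitVol := P.memLp_top_res hf hdv
  have hr2 : MemLp (P.res f u) 2 unitVol := P.memLp_res hfL2 u
  rw [restrict_Ioo_eq] at hne
  set r := P.res f u with hr
  set L := Linf r with hL
  have hL0 : 0 ≤ L := Linf_nonneg hrb
  have hrL : ∀ᵐ t ∂unitVol, |r t| ≤ L := ae_abs_le_Linf hrb
  have hLpos : 0 < L := by
    refine hL0.lt_of_ne fun h0 => hne ?_
    filter_upwards [hrL] with t ht
    exact abs_nonpos_iff.1 (h0 ▸ ht)
  have hI0 := integral_rpow_pos hr2 hne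
  set I := ∫ t in (0:ℝ)..1, |r t| ^ ((2:ℝ)/3) with hI
  have hLp : Lp23 r ^ ((2:ℝ)/3) = I := by
    rw [Lp23, ← Real.rpow_mul hI0.le]
    norm_num
  have hLp0 : 0 ≤ Lp23 r := Real.rpow_nonneg hI0.le _
  rw [Real.div_rpow hL0 hLp0, hLp]
  have hρ : 0 < (1 + 4 * (L ^ ((2:ℝ)/3) / I)) ^ 2 := by positivity
  obtain ⟨C, hC⟩ := P.exists_avg_res_sub_sq_le hfL2 hu hu2 hρ
  obtain ⟨δ, hδ, hδr⟩ := exists_rootSum_le hr2 (ε := I / 4) (by positivity)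
  have hCt := tendsto_const_div_atTop_nhds_zero_nat C
  have h2t := tendsto_const_div_atTop_nhds_zero_nat (2:ℝ)
  obtain ⟨N₀, hN₀⟩ := Filter.eventually_atTop.1 <|
    (hCt.eventually_lt_const (show 0 < L ^ 2 by positivity)).and <|
    (hCt.eventually_lt_const (show 0 < (I / 4) ^ 3 by positivity)).and <|
    (h2t.eventually_lt_const hδ).and (Filter.eventually_gt_atTop 0)
  refine ⟨N₀, fun N hN m hm uh huh => ?_⟩
  obtain ⟨hCL, hCI, h2δ, hNpos⟩ := hN₀ N hN
  have havg := hC N hNpos m hm uh huh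
  obtain ⟨h1, h2, h3⟩ := m.bounds_of_close hr2 (P.memLp_res hfL2 uh) hrL hL0 hI0 rfl
    (hδr N m fun i hi => (hm i hi).2.trans_lt h2δ)
    (fun i hi => (havg i hi).trans hCL.le) (fun i hi => (havg i hi).trans hCI.le)
  rw [Mesh.alpha_rpow]
  exact ⟨h1, h2, fun i hi => ⟨m.one_le_rho _ i, h3 i hi⟩, m.one_le_sigma _,
    m.sigma_le_two (by linarith)⟩

end EquidMesh
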